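/- arXiv:2109.03302 — 4 statements merged into one kernel-verified Lean document; each statement's English description precedes it below -/
import Mathlib

section
/- Fix integers n ≥ 1 and g ≥ 1. For each permutation σ ∈ Perm(Fin n) and each monotone (nondecreasing) function χ : Fin n → Fin g, define the set C(σ,χ) := {x : Fin n → ℝ | (∀ a b : Fin n, a < b → x (σ a) < x (σ b)) ∧ (∀ a : Fin n, (χ a : ℝ) < x (σ a) ∧ x (σ a) < (χ a : ℝ) + 1)}. Then: (i) each C(σ,χ) is a nonempty, open, convex subset of the space Fin n → ℝ; (ii) the sets C(σ,χ) for distinct pairs (σ,χ) are pairwise disjoint; and (iii) their union over all σ ∈ Perm(Fin n) and all monotone χ : Fin n → Fin g equals the set of all injective x : Fin n → ℝ such that every value x i lies in the union of open intervals ⋃_{j ∈ Fin g} ((j : ℝ), (j : ℝ)+1). -/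
/-!
Composition with `σ` is a linear homeomorphism carrying `cell n g σ χ` onto the strictly increasing
tuples in the open box `∏ a, (χ a, χ a + 1)`, so openness and convexity reduce to that box and to
the set of strictly increasing tuples. On a cell, `σ` is the permutation sorting the coordinates and
`χ a` is the integer part of the `a`-th smallest coordinate; hence a point lies in at most one cell,
and `χ` is monotone whenever the cell is nonempty. Conversely, a monotone `χ` becomes a strictly
increasing tuple of its box on adding an order embedding of `Fin n` into `(0, 1)`.
-/

/-- The open cell of the configuration space of n points on the disjoint union of g open
unit intervals (j, j+1), j = 0, …, g−1, indexed by a permutation σ (the ordering of the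
points) and a nondecreasing function χ (recording which interval each point lies in). -/
def cell (n g : ℕ) (σ : Equiv.Perm (Fin n)) (χ : Fin n → Fin g) : Set (Fin n → ℝ) :=
  {x | (∀ a b : Fin n, a < b → x (σ a) < x (σ b)) ∧
    (∀ a : Fin n, ((χ a : ℕ) : ℝ) < x (σ a) ∧ x (σ a) < ((χ a : ℕ) : ℝ) + 1)}

open Set Function

section StrictMonoFunctions

variable {ι : Type*}

theorem isOpen_setOf_strictMono {α : Type*} [Finite ι] [Preorder ι] [TopologicalSpace α]
    [LinearOrder α] [OrderClosedTopology α] : IsOpen {y : ι → α | StrictMono y} := by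
  simp only [StrictMono, ofPred_forall]
  exact isOpen_iInter_of_finite fun a => isOpen_iInter_of_finite fun b =>
    isOpen_iInter_of_finite fun _ => isOpen_lt (continuous_apply a) (continuous_apply b)

theorem convex_setOf_strictMono (𝕜 : Type*) {E : Type*} [Preorder ι] [Semiring 𝕜] [PartialOrder 𝕜]
    [AddCommMonoid E] [PartialOrder E] [IsOrderedCancelAddMonoid E] [Module 𝕜 E]
    [PosSMulStrictMono 𝕜 E] : Convex 𝕜 {y : ι → E | StrictMono y} :=
  convex_iff_forall_pos.2 fun _ hy _ hz _ _ hs ht _ =>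
    (StrictMono.const_smul hy hs).add (StrictMono.const_smul hz ht)

theorem exists_strictMono_mem_Ioo_add {M : Type*} [Countable ι] [LinearOrder ι]
    [AddCommMonoid M] [LinearOrder M] [IsOrderedCancelAddMonoid M] [DenselyOrdered M] {f : ι → M}
    (hf : Monotone f) {ε : M} (hε : 0 < ε) :
    ∃ y : ι → M, StrictMono y ∧ ∀ i, y i ∈ Ioo (f i) (f i + ε) := by
  have : Nontrivial (Ioo 0 ε) := (Ioo_infinite hε).nontrivial.coe_sort
  obtain ⟨e⟩ := Order.embedding_from_countable_to_dense ι (Ioo 0 ε)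
  exact ⟨fun i => f i + e i, hf.add_strictMono e.strictMono, fun i =>
    ⟨lt_add_of_pos_right _ (e i).2.1, add_lt_add_right (e i).2.2 _⟩⟩

theorem injective_of_strictMono_comp_equiv {κ α : Type*} [LinearOrder ι] [Preorder α]
    {x : κ → α} {σ : ι ≃ κ} (h : StrictMono (x ∘ σ)) : Injective x :=
  (Equiv.injective_comp σ x).1 h.injective

theorem equiv_eq_of_strictMono_comp {κ α : Type*} [LinearOrder ι] [WellFoundedLT ι] [Preorder α]
    {x : κ → α} {σ τ : ι ≃ κ} (hσ : StrictMono (x ∘ σ)) (hτ : StrictMono (x ∘ τ)) : σ = τ := by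
  have hrange : range (x ∘ σ) = range (x ∘ τ) := by
    rw [σ.surjective.range_comp, τ.surjective.range_comp]
  have hcomp : x ∘ σ = x ∘ τ := (hσ.range_inj hτ).1 hrange
  exact Equiv.ext fun a => injective_of_strictMono_comp_equiv hσ (congrFun hcomp a)

theorem strictMono_comp_sort {n : ℕ} {α : Type*} [LinearOrder α] {x : Fin n → α}
    (hx : Injective x) : StrictMono (x ∘ Tuple.sort x) :=
  (Tuple.monotone_sort x).strictMono_of_injective (hx.comp (Tuple.sort x).injective)

end StrictMonoFunctions

namespace cell

variable {n g : ℕ} {σ σ' : Equiv.Perm (Fin n)} {χ χ' : Fin n → Fin g} {x : Fin n → ℝ}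

theorem strictMono_comp (hx : x ∈ cell n g σ χ) : StrictMono (x ∘ σ) :=
  fun a b => hx.1 a b

theorem floor_eq (hx : x ∈ cell n g σ χ) (a : Fin n) : ⌊x (σ a)⌋₊ = χ a :=
  Nat.floor_eq_on_Ico _ _ (Ioo_subset_Ico_self (hx.2 a))

theorem eq_preimage (σ : Equiv.Perm (Fin n)) (χ : Fin n → Fin g) :
    cell n g σ χ = (· ∘ σ) ⁻¹' ({y : Fin n → ℝ | StrictMono y} ∩
      univ.pi fun a => Ioo ((χ a : ℕ) : ℝ) ((χ a : ℕ) + 1)) := by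
  ext x
  exact and_congr ⟨fun h _ _ => h _ _, fun h _ _ hab => h hab⟩ mem_univ_pi.symm

protected theorem isOpen (σ : Equiv.Perm (Fin n)) (χ : Fin n → Fin g) :
    IsOpen (cell n g σ χ) := by
  rw [eq_preimage]
  exact (isOpen_setOf_strictMono.inter (isOpen_set_pi finite_univ fun _ _ => isOpen_Ioo)).preimage
    (Pi.continuous_precomp σ)

protected theorem convex (σ : Equiv.Perm (Fin n)) (χ : Fin n → Fin g) :
    Convex ℝ (cell n g σ χ) := by
  rw [eq_preimage]
  exact ((convex_setOf_strictMono ℝ).inter (convex_pi fun _ _ => convex_Ioo _ _)).linear_preimage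
    (LinearMap.funLeft ℝ ℝ σ)

theorem nonempty_iff_monotone : (cell n g σ χ).Nonempty ↔ Monotone χ := by
  constructor
  · rintro ⟨x, hx⟩ a b hab
    rw [Fin.le_def, ← floor_eq hx a, ← floor_eq hx b]
    exact Nat.floor_mono ((strictMono_comp hx).monotone hab)
  · intro hχ
    have hcast : Monotone fun a => ((χ a : ℕ) : ℝ) := fun a b hab => Nat.cast_le.2 (hχ hab)
    obtain ⟨y, hy, hbox⟩ := exists_strictMono_mem_Ioo_add hcast one_pos
    rw [eq_preimage]
    refine Nonempty.preimage ?_ σ.injective.surjective_comp_right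
    exact ⟨y, hy, fun a _ => hbox a⟩

theorem index_unique (hx : x ∈ cell n g σ χ) (hx' : x ∈ cell n g σ' χ') : (σ, χ) = (σ', χ') := by
  obtain rfl : σ = σ' := equiv_eq_of_strictMono_comp (strictMono_comp hx) (strictMono_comp hx')
  have hχ : χ = χ' := funext fun a => Fin.ext ((floor_eq hx a).symm.trans (floor_eq hx' a))
  rw [hχ]

theorem exists_mem_iff : (∃ σ χ, x ∈ cell n g σ χ) ↔
    Injective x ∧ ∀ i, ∃ j : Fin g, x i ∈ Ioo ((j : ℕ) : ℝ) ((j : ℕ) + 1) := by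
  constructor
  · rintro ⟨σ, χ, hx⟩
    exact ⟨injective_of_strictMono_comp_equiv (strictMono_comp hx),
      σ.surjective.forall.2 fun a => ⟨χ a, hx.2 a⟩⟩
  · rintro ⟨hinj, hmem⟩
    choose c hc using hmem
    exact ⟨Tuple.sort x, c ∘ Tuple.sort x, fun _ _ hab => strictMono_comp_sort hinj hab,
      fun a => hc (Tuple.sort x a)⟩

end cell

/-- the cells C(σ,χ) for σ a permutation and χ monotone are nonempty open
convex sets, pairwise disjoint, and their union is the set of injective tuples all of whose
values lie in the union of the open intervals (j, j+1), j = 0, …, g−1. -/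
theorem cells_decompose_configuration_space
    (n g : ℕ) (hn : 1 ≤ n) (hg : 1 ≤ g) :
    (∀ (σ : Equiv.Perm (Fin n)) (χ : Fin n → Fin g), Monotone χ →
      (cell n g σ χ).Nonempty ∧ IsOpen (cell n g σ χ) ∧ Convex ℝ (cell n g σ χ)) ∧
    (∀ (σ σ' : Equiv.Perm (Fin n)) (χ χ' : Fin n → Fin g), Monotone χ → Monotone χ' →
      (σ, χ) ≠ (σ', χ') → Disjoint (cell n g σ χ) (cell n g σ' χ')) ∧
    ((⋃ (σ : Equiv.Perm (Fin n)) (χ : Fin n → Fin g) (_ : Monotone χ), cell n g σ χ)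
      = {x : Fin n → ℝ | Function.Injective x ∧
          ∀ i, x i ∈ ⋃ j : Fin g, Set.Ioo ((j : ℕ) : ℝ) (((j : ℕ) : ℝ) + 1)}) := by
  refine ⟨fun σ χ hχ => ⟨cell.nonempty_iff_monotone.2 hχ, cell.isOpen σ χ, cell.convex σ χ⟩,
    fun σ σ' χ χ' _ _ hne => ?_, ?_⟩
  · exact disjoint_left.2 fun x hx hx' => hne (cell.index_unique hx hx')
  · ext x
    have hmono : ∀ σ χ, x ∈ cell n g σ χ → Monotone χ :=
      fun _ _ hx => cell.nonempty_iff_monotone.1 ⟨x, hx⟩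
    simp only [mem_iUnion, mem_ofPred_eq, ← cell.exists_mem_iff]
    exact exists₂_congr fun σ χ => ⟨fun ⟨_, hx⟩ => hx, fun hx => ⟨hmono σ χ hx, hx⟩⟩
end

section
/- Let X and Y be locally compact Hausdorff topological spaces, and let W := {(a, b) ∈ OnePoint X × OnePoint Y | a = ∞ ∨ b = ∞} (the 'wedge' locus). Then the quotient of OnePoint X × OnePoint Y obtained by collapsing W to a single point is homeomorphic to OnePoint(X × Y), via a homeomorphism sending the class of (x, y), for x ∈ X and y ∈ Y, to the point (x, y), and the class of W to ∞. -/
/-!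
The smash map `OnePoint X × OnePoint Y → OnePoint (X × Y)` extends the identity of `X × Y` and
sends the wedge to `∞`. It is continuous because a compact subset of `X × Y` lies in the box
`closure A ×ˢ closure B` spanned by its projections `A` and `B`, and in an R₁ space the closure of a
compact set is compact. It is a closed map because `OnePoint X × OnePoint Y` is compact, so that a
closed subset missing the wedge is a compact subset of `X × Y`. A closed continuous surjection is a
quotient map, and only the fibre over `∞`, the wedge, can have more than one point.
-/

/-- The setoid collapsing a subset `W` of `P` to a single point. -/
def collapseSetoid {P : Type*} (W : Set P) : Setoid P where
  r x y := x = y ∨ (x ∈ W ∧ y ∈ W)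
  iseqv := by
    refine ⟨fun x => Or.inl rfl, ?_, ?_⟩
    · rintro x y (rfl | ⟨h1, h2⟩)
      · exact Or.inl rfl
      · exact Or.inr ⟨h2, h1⟩
    · rintro x y z (rfl | ⟨h1, h2⟩) (rfl | ⟨h3, h4⟩)
      · exact Or.inl rfl
      · exact Or.inr ⟨h3, h4⟩
      · exact Or.inr ⟨h1, h2⟩
      · exact Or.inr ⟨h1, h4⟩

section Collapse

variable {P Q : Type*} {f : P → Q} {W : Set P} {z : Q}

theorem ker_eq_collapseSetoid (hW : f ⁻¹' {z} = W) (hinj : Set.InjOn f Wᶜ) :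
    Setoid.ker f = collapseSetoid W := by
  subst hW
  ext p q
  change f p = f q ↔ p = q ∨ f p = z ∧ f q = z
  constructor
  · intro hpq
    by_cases hp : f p = z
    · exact Or.inr ⟨hp, hpq.symm.trans hp⟩
    · exact Or.inl (hinj hp (fun hq : f q = z => hp (hpq.trans hq)) hpq)
  · rintro (rfl | ⟨hp, hq⟩)
    · rfl
    · exact hp.trans hq.symm

variable [TopologicalSpace P] [TopologicalSpace Q]

/-- The homeomorphism induced by a quotient map `f : P → Q` from the collapse of one of its fibres
`W` onto `Q`, when all other fibres are singletons. -/
noncomputable def collapseHomeomorph (hf : Topology.IsQuotientMap f) (hW : f ⁻¹' {z} = W)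
    (hinj : Set.InjOn f Wᶜ) : Quotient (collapseSetoid W) ≃ₜ Q :=
  (Homeomorph.Quotient.congrRight (Setoid.ext_iff.1 (ker_eq_collapseSetoid hW hinj).symm)).trans
    (Topology.IsQuotientMap.homeomorph (f := ⟨f, hf.continuous⟩) hf)

@[simp]
theorem collapseHomeomorph_mk (hf : Topology.IsQuotientMap f) (hW : f ⁻¹' {z} = W)
    (hinj : Set.InjOn f Wᶜ) (p : P) : collapseHomeomorph hf hW hinj (Quotient.mk _ p) = f p :=
  rfl

end Collapse

section SmashMap

open Set Topology
open scoped OnePoint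

variable {X Y : Type*}

/-- The projection of `OnePoint X × OnePoint Y` onto the smash product of `OnePoint X` and
`OnePoint Y` with base points `∞`, the smash product being modelled as `OnePoint (X × Y)`. -/
def smashMap : OnePoint X × OnePoint Y → OnePoint (X × Y)
  | (.some x, .some y) => .some (x, y)
  | (∞, _) => ∞
  | (_, ∞) => ∞

@[simp]
theorem smashMap_coe_coe (x : X) (y : Y) :
    smashMap ((x : OnePoint X), (y : OnePoint Y)) = ((x, y) : X × Y) :=
  rfl

@[simp]
theorem smashMap_infty_left (b : OnePoint Y) : smashMap ((∞ : OnePoint X), b) = ∞ := by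
  cases b <;> rfl

@[simp]
theorem smashMap_infty_right (a : OnePoint X) : smashMap (a, (∞ : OnePoint Y)) = ∞ := by
  cases a <;> rfl

theorem smashMap_eq_infty_iff {p : OnePoint X × OnePoint Y} :
    smashMap p = ∞ ↔ p.1 = ∞ ∨ p.2 = ∞ := by
  obtain ⟨a, b⟩ := p
  induction a using OnePoint.rec <;> induction b using OnePoint.rec <;> simp

theorem smashMap_preimage_infty :
    (smashMap ⁻¹' {∞} : Set (OnePoint X × OnePoint Y)) = {p | p.1 = ∞ ∨ p.2 = ∞} :=
  ext fun _ => smashMap_eq_infty_iff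

theorem injOn_smashMap :
    InjOn smashMap {p : OnePoint X × OnePoint Y | p.1 = ∞ ∨ p.2 = ∞}ᶜ := by
  rintro ⟨a, b⟩ hp ⟨c, d⟩ hq h
  obtain ⟨ha, hb⟩ := not_or.1 hp
  obtain ⟨hc, hd⟩ := not_or.1 hq
  lift a to X using ha
  lift b to Y using hb
  lift c to X using hc
  lift d to Y using hd
  simpa using h

theorem smashMap_surjective :
    Function.Surjective (smashMap : OnePoint X × OnePoint Y → OnePoint (X × Y)) := by
  intro z
  induction z using OnePoint.rec with
  | infty => exact ⟨(∞, ∞), rfl⟩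
  | coe z => exact ⟨(z.1, z.2), rfl⟩

theorem smashMap_preimage_of_infty_notMem {U : Set (OnePoint (X × Y))} (hU : ∞ ∉ U) :
    smashMap ⁻¹' U = Prod.map OnePoint.some OnePoint.some '' (OnePoint.some ⁻¹' U) := by
  ext ⟨a, b⟩
  induction a using OnePoint.rec <;> induction b using OnePoint.rec <;> simp [hU]

theorem coe_preimage_smashMap_image (C : Set (OnePoint X × OnePoint Y)) :
    OnePoint.some ⁻¹' (smashMap '' C) = Prod.map OnePoint.some OnePoint.some ⁻¹' C := by
  ext ⟨x, y⟩
  refine ⟨?_, fun h => ⟨_, h, rfl⟩⟩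
  rintro ⟨⟨a, b⟩, hC, hab⟩
  induction a using OnePoint.rec <;> induction b using OnePoint.rec <;> simp_all

variable [TopologicalSpace X] [TopologicalSpace Y]

theorem isOpenEmbedding_prodMap_coe :
    IsOpenEmbedding (Prod.map OnePoint.some OnePoint.some : X × Y → OnePoint X × OnePoint Y) :=
  OnePoint.isOpenEmbedding_coe.prodMap OnePoint.isOpenEmbedding_coe

theorem isClosed_prodMap_coe_image [R1Space X] [R1Space Y] {K : Set (X × Y)}
    (hK : IsClosed K) (hKc : IsCompact K) :
    IsClosed (Prod.map OnePoint.some OnePoint.some '' K) := by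
  set A := closure (Prod.fst '' K)
  set B := closure (Prod.snd '' K)
  have hA : IsClosed (OnePoint.some '' A) :=
    OnePoint.isClosed_image_coe.2 ⟨isClosed_closure, (hKc.image continuous_fst).closure⟩
  have hB : IsClosed (OnePoint.some '' B) :=
    OnePoint.isClosed_image_coe.2 ⟨isClosed_closure, (hKc.image continuous_snd).closure⟩
  have hKAB : K ⊆ A ×ˢ B := fun p hp =>
    ⟨subset_closure (mem_image_of_mem _ hp), subset_closure (mem_image_of_mem _ hp)⟩
  have hdiff : Prod.map OnePoint.some OnePoint.some '' K =
      (OnePoint.some '' A) ×ˢ (OnePoint.some '' B) \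
        Prod.map OnePoint.some OnePoint.some '' Kᶜ := by
    rw [← prodMap_image_prod, ← image_sdiff isOpenEmbedding_prodMap_coe.injective, sdiff_compl]
    exact congrArg _ (inter_eq_right.2 hKAB).symm
  rw [hdiff]
  exact (hA.prod hB).sdiff (isOpenEmbedding_prodMap_coe.isOpenMap _ hK.isOpen_compl)

theorem continuous_smashMap [R1Space X] [R1Space Y] :
    Continuous (smashMap : OnePoint X × OnePoint Y → OnePoint (X × Y)) := by
  refine continuous_def.2 fun U hU => ?_
  by_cases h : ∞ ∈ U
  · obtain ⟨hclosed, hcompact⟩ := (OnePoint.isOpen_iff_of_mem h).1 hU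
    rw [← isClosed_compl_iff, ← preimage_compl,
      smashMap_preimage_of_infty_notMem (notMem_compl_iff.2 h)]
    exact isClosed_prodMap_coe_image hclosed hcompact
  · rw [smashMap_preimage_of_infty_notMem h]
    exact isOpenEmbedding_prodMap_coe.isOpenMap _ ((OnePoint.isOpen_iff_of_notMem h).1 hU)

theorem isClosedMap_smashMap :
    IsClosedMap (smashMap : OnePoint X × OnePoint Y → OnePoint (X × Y)) := by
  intro C hC
  have hclosed : IsClosed (OnePoint.some ⁻¹' (smashMap '' C)) := by
    rw [coe_preimage_smashMap_image]
    exact hC.preimage isOpenEmbedding_prodMap_coe.continuous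
  by_cases h : ∞ ∈ smashMap '' C
  · exact (OnePoint.isClosed_iff_of_mem h).2 hclosed
  · refine (OnePoint.isClosed_iff_of_notMem h).2 ⟨hclosed, ?_⟩
    rw [coe_preimage_smashMap_image]
    refine isOpenEmbedding_prodMap_coe.isInducing.isCompact_preimage' hC.isCompact ?_
    rintro ⟨a, b⟩ hp
    obtain ⟨ha, hb⟩ : a ≠ ∞ ∧ b ≠ ∞ :=
      not_or.1 fun hab => h ⟨(a, b), hp, smashMap_eq_infty_iff.2 hab⟩
    lift a to X using ha
    lift b to Y using hb
    exact mem_range_self (a, b)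

theorem isQuotientMap_smashMap [R1Space X] [R1Space Y] :
    IsQuotientMap (smashMap : OnePoint X × OnePoint Y → OnePoint (X × Y)) :=
  isClosedMap_smashMap.isQuotientMap continuous_smashMap smashMap_surjective

end SmashMap

theorem collapse_wedge_onePoint_prod_homeo_general
    (X Y : Type*) [TopologicalSpace X] [R1Space X] [TopologicalSpace Y] [R1Space Y] :
    ∃ h : Quotient (collapseSetoid
            {p : OnePoint X × OnePoint Y | p.1 = OnePoint.infty ∨ p.2 = OnePoint.infty})
          ≃ₜ OnePoint (X × Y),
      (∀ (x : X) (y : Y),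
          h (Quotient.mk (collapseSetoid
              {p : OnePoint X × OnePoint Y | p.1 = OnePoint.infty ∨ p.2 = OnePoint.infty})
              ((x : OnePoint X), (y : OnePoint Y)))
            = (((x, y) : X × Y) : OnePoint (X × Y))) ∧
      (∀ p : OnePoint X × OnePoint Y, p.1 = OnePoint.infty ∨ p.2 = OnePoint.infty →
          h (Quotient.mk (collapseSetoid
              {p : OnePoint X × OnePoint Y | p.1 = OnePoint.infty ∨ p.2 = OnePoint.infty})
              p)
            = OnePoint.infty) :=
  ⟨collapseHomeomorph isQuotientMap_smashMap smashMap_preimage_infty injOn_smashMap,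
    fun x y => (collapseHomeomorph_mk ..).trans (smashMap_coe_coe x y),
    fun _ hp => (collapseHomeomorph_mk ..).trans (smashMap_eq_infty_iff.2 hp)⟩

/-- the smash-product identification: collapsing the wedge locus
{(a,b) | a = ∞ or b = ∞} in OnePoint X × OnePoint Y yields OnePoint (X × Y). -/
theorem collapse_wedge_onePoint_prod_homeo
    (X Y : Type*) [TopologicalSpace X] [LocallyCompactSpace X] [T2Space X]
    [TopologicalSpace Y] [LocallyCompactSpace Y] [T2Space Y] :
    ∃ h : Quotient (collapseSetoid
            {p : OnePoint X × OnePoint Y | p.1 = OnePoint.infty ∨ p.2 = OnePoint.infty})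
          ≃ₜ OnePoint (X × Y),
      (∀ (x : X) (y : Y),
          h (Quotient.mk (collapseSetoid
              {p : OnePoint X × OnePoint Y | p.1 = OnePoint.infty ∨ p.2 = OnePoint.infty})
              ((x : OnePoint X), (y : OnePoint Y)))
            = (((x, y) : X × Y) : OnePoint (X × Y))) ∧
      (∀ p : OnePoint X × OnePoint Y, p.1 = OnePoint.infty ∨ p.2 = OnePoint.infty →
          h (Quotient.mk (collapseSetoid
              {p : OnePoint X × OnePoint Y | p.1 = OnePoint.infty ∨ p.2 = OnePoint.infty})
              p)
            = OnePoint.infty) :=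
  collapse_wedge_onePoint_prod_homeo_general X Y
end

section
/- Let G be a finite group acting continuously by homeomorphisms on a locally compact Hausdorff topological space A, and extend the action of G to OnePoint A by letting every group element fix the added point ∞. Then the one-point compactification of the orbit space, OnePoint(A / G), is homeomorphic to the orbit space of the extended action, (OnePoint A) / G, via a homeomorphism sending the orbit class of each a ∈ A (viewed in OnePoint(A / G)) to the orbit class of a in (OnePoint A) / G, and sending ∞ to the orbit class of ∞. -/
/-!
The orbit projection `π : A → A / G` is open, and it is proper when `G` is compact, in particular
when `G` is finite with the discrete topology. For any open quotient map that is also proper, its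
extension to the one-point compactifications sending `∞` to `∞` is again an open quotient map:
properness gives continuity at `∞`, and openness at `∞` holds because, for `K` closed and compact,
the complement of the image of `Kᶜ` is closed and contained in the compact image of `K`. The fibres
of the extension of `π` are the orbits of `G` in `OnePoint A`, so it identifies `(OnePoint A) / G`
with `OnePoint (A / G)`.
-/

/-- The action of `G` on the one-point compactification, fixing the added point ∞. -/
instance onePointSMul (G A : Type*) [SMul G A] : SMul G (OnePoint A) :=
  ⟨fun g p => Option.elim p OnePoint.infty (fun a => ((g • a : A) : OnePoint A))⟩

instance onePointMulAction (G A : Type*) [Monoid G] [MulAction G A] :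
    MulAction G (OnePoint A) where
  one_smul p := by
    cases p with
    | infty => rfl
    | coe a => exact congrArg _ (one_smul G a)
  mul_smul g h p := by
    cases p with
    | infty => rfl
    | coe a => exact congrArg _ (mul_smul g h a)

open Filter Function MulAction Set Topology

section OnePointMap

theorem surjective_onePointMap {X Y : Type*} {f : X → Y} (hf : Surjective f) :
    Surjective (OnePoint.map f) :=
  OnePoint.forall.mpr ⟨⟨OnePoint.infty, rfl⟩, hf.forall.mpr fun x => ⟨x, rfl⟩⟩

variable {X Y : Type*} [TopologicalSpace X] [TopologicalSpace Y] {f : X → Y}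

theorem tendsto_coclosedCompact_of_isProperMap (hf : IsProperMap f) :
    Tendsto f (coclosedCompact X) (coclosedCompact Y) :=
  (hasBasis_coclosedCompact.tendsto_iff hasBasis_coclosedCompact).mpr fun K hK =>
    ⟨f ⁻¹' K, ⟨hK.1.preimage hf.continuous, hf.isCompact_preimage hK.2⟩, fun _ hx => hx⟩

theorem coclosedCompact_le_map_of_isOpenQuotientMap (hf : IsOpenQuotientMap f) :
    coclosedCompact Y ≤ map f (coclosedCompact X) := by
  refine (hasBasis_coclosedCompact.map f).ge_iff.mpr fun K ⟨hK_closed, hK_compact⟩ => ?_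
  have h_closed : IsClosed (f '' Kᶜ)ᶜ := (hf.isOpenMap _ hK_closed.isOpen_compl).isClosed_compl
  have h_subset : (f '' Kᶜ)ᶜ ⊆ f '' K := by
    simpa only [compl_compl] using subset_image_compl (s := Kᶜ) hf.surjective
  have h_compact : IsCompact (f '' Kᶜ)ᶜ :=
    (hK_compact.image hf.continuous).of_isClosed_subset h_closed h_subset
  simpa only [compl_compl] using h_compact.compl_mem_coclosedCompact_of_isClosed h_closed

theorem isOpenMap_onePointMap (hf : IsOpenQuotientMap f) : IsOpenMap (OnePoint.map f) := by
  refine IsOpenMap.of_nhds_le fun p => ?_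
  cases p with
  | infty =>
    calc 𝓝 OnePoint.infty
        = map OnePoint.some (coclosedCompact Y) ⊔ pure OnePoint.infty := OnePoint.nhds_infty_eq
      _ ≤ map OnePoint.some (map f (coclosedCompact X)) ⊔ pure OnePoint.infty :=
        sup_le_sup_right (map_mono (coclosedCompact_le_map_of_isOpenQuotientMap hf)) _
      _ = map (OnePoint.map f) (𝓝 OnePoint.infty) := by
        rw [OnePoint.nhds_infty_eq, map_sup, map_pure, map_map, map_map]
        rfl
  | coe x =>
    refine Eq.le ?_
    calc 𝓝 (f x : OnePoint Y)
        = map OnePoint.some (map f (𝓝 x)) := by rw [OnePoint.nhds_coe_eq, hf.map_nhds_eq]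
      _ = map (OnePoint.map f) (𝓝 (x : OnePoint X)) := by
        rw [OnePoint.nhds_coe_eq, map_map, map_map]
        rfl

theorem isOpenQuotientMap_onePointMap (hf : IsOpenQuotientMap f) (hf_proper : IsProperMap f) :
    IsOpenQuotientMap (OnePoint.map f) where
  surjective := surjective_onePointMap hf.surjective
  continuous :=
    OnePoint.continuous_map hf.continuous (tendsto_coclosedCompact_of_isProperMap hf_proper)
  isOpenMap := isOpenMap_onePointMap hf

end OnePointMap

section OrbitSpace

theorem smul_onePoint_infty {G A : Type*} [SMul G A] (g : G) :
    g • (OnePoint.infty : OnePoint A) = OnePoint.infty := rfl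

theorem smul_onePoint_coe {G A : Type*} [SMul G A] (g : G) (a : A) :
    g • (a : OnePoint A) = ((g • a : A) : OnePoint A) := rfl

variable (G A : Type*) [Group G] [MulAction G A]

theorem isProperMap_quotientMk_orbitRel [TopologicalSpace G] [CompactSpace G] [ContinuousInv G]
    [TopologicalSpace A] [ContinuousSMul G A] : IsProperMap (Quotient.mk (orbitRel G A)) := by
  refine isProperMap_iff_isClosedMap_and_compact_fibers.mpr
    ⟨continuous_quotient_mk', isClosedMap_quotient, Quotient.ind fun a => ?_⟩
  have h_fibre : Quotient.mk (orbitRel G A) ⁻¹' {Quotient.mk (orbitRel G A) a} = orbit G a :=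
    Set.ext fun _ => Quotient.eq
  rw [h_fibre]
  exact isCompact_range (continuous_id.smul continuous_const)

theorem orbitRel_onePoint_iff (p q : OnePoint A) :
    orbitRel G (OnePoint A) p q ↔
      p.map (Quotient.mk (orbitRel G A)) = q.map (Quotient.mk (orbitRel G A)) := by
  rw [orbitRel_apply, mem_orbit_iff]
  cases p <;> cases q <;>
    simp [smul_onePoint_infty, smul_onePoint_coe, Quotient.eq, orbitRel_apply, mem_orbit_iff]

end OrbitSpace

theorem onePoint_orbit_space_homeo_general
    (G : Type*) [Group G] [TopologicalSpace G] [CompactSpace G] [ContinuousInv G]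
    (A : Type*) [TopologicalSpace A] [MulAction G A] [ContinuousSMul G A] :
    ∃ h : OnePoint (Quotient (orbitRel G A)) ≃ₜ Quotient (orbitRel G (OnePoint A)),
      (∀ a : A, h (Quotient.mk (orbitRel G A) a) = Quotient.mk (orbitRel G (OnePoint A)) a) ∧
      h OnePoint.infty = Quotient.mk (orbitRel G (OnePoint A)) OnePoint.infty := by
  have hπ : IsOpenQuotientMap (OnePoint.map (Quotient.mk (orbitRel G A))) :=
    isOpenQuotientMap_onePointMap isOpenQuotientMap_quotientMk (isProperMap_quotientMk_orbitRel G A)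
  let e : Quotient (orbitRel G (OnePoint A)) ≃ₜ OnePoint (Quotient (orbitRel G A)) :=
    (Homeomorph.Quotient.congrRight (orbitRel_onePoint_iff G A)).trans
      (IsQuotientMap.homeomorph (f := ⟨_, hπ.continuous⟩) hπ.isQuotientMap)
  exact ⟨e.symm, fun a => e.symm_apply_eq.mpr rfl, e.symm_apply_eq.mpr rfl⟩

/-- for a finite group G acting continuously (by homeomorphisms) on a locally
compact Hausdorff space A, the one-point compactification of the orbit space A/G is
homeomorphic to the orbit space of the extended action on OnePoint A. -/
theorem onePoint_orbit_space_homeo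
    (G : Type*) [Group G] [Finite G]
    (A : Type*) [TopologicalSpace A] [LocallyCompactSpace A] [T2Space A]
    [MulAction G A] [ContinuousConstSMul G A] :
    ∃ h : OnePoint (Quotient (MulAction.orbitRel G A)) ≃ₜ
          Quotient (MulAction.orbitRel G (OnePoint A)),
      (∀ a : A,
          h ((Quotient.mk (MulAction.orbitRel G A) a : Quotient (MulAction.orbitRel G A)) :
              OnePoint (Quotient (MulAction.orbitRel G A)))
            = Quotient.mk (MulAction.orbitRel G (OnePoint A)) (a : OnePoint A)) ∧
      h OnePoint.infty
        = Quotient.mk (MulAction.orbitRel G (OnePoint A)) OnePoint.infty := by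
  let : TopologicalSpace G := ⊥
  have : DiscreteTopology G := ⟨rfl⟩
  have : ContinuousSMul G A := ⟨continuous_prod_of_discrete_left.mpr continuous_const_smul⟩
  exact onePoint_orbit_space_homeo_general G A
end

section
/- Let G be a finite group and k a field in which the cardinality of G is invertible (i.e., (Fintype.card G : k) ≠ 0). Let (V, ρ) be a finite-dimensional representation of G over k, with ρ̂ : MonoidAlgebra k G →ₐ[k] Module.End k V the induced algebra homomorphism, and regard V as a MonoidAlgebra k G-module via ρ̂. Let R = MonoidAlgebra k G, fix N, M ∈ ℕ, a matrix A : Fin N → Fin M → R, the R-linear map ∂ : (Fin N → R) →ₗ[R] (Fin M → R) given by ∂(v) = fun j => ∑ i, (v i) * (A i j), and the k-linear map T_A : (Fin M → V) →ₗ[k] (Fin N → V) given by (T_A w) i = ∑ j, ρ̂(A i j)(w j). Then: (i) dim_k Hom_R((Fin M → R) ⧸ LinearMap.range ∂, V) = dim_k (LinearMap.ker T_A); and (ii) dim_k Hom_R(LinearMap.ker ∂, V) = dim_k ((Fin N → V) ⧸ LinearMap.range T_A). -/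
/-! Write `R = k[G]`. Evaluation at the standard basis identifies `Hom_R(R^n, V)` with `V^n`, and
under this identification precomposition with `∂` becomes `T_A`. So both claims compute
`Hom_R(-, V)` on the exact sequence `0 → ker ∂ → R^N → R^M → coker ∂ → 0`. Left exactness of
`Hom_R(-, V)` gives (i). Its right exactness, i.e. the injectivity of `V`, gives (ii); here
Maschke's theorem enters. -/

/-- The R-linear map (Fin N → R) → (Fin M → R) given by right multiplication by the
matrix A, i.e. v ↦ (j ↦ ∑ i, v i * A i j). -/
def matrixBoundary (R : Type*) [Ring R] (N M : ℕ) (A : Fin N → Fin M → R) :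
    (Fin N → R) →ₗ[R] (Fin M → R) where
  toFun v := fun j => ∑ i, v i * A i j
  map_add' v w := by
    funext j
    simp [add_mul, Finset.sum_add_distrib]
  map_smul' c v := by
    funext j
    simp [Finset.mul_sum, mul_assoc, smul_eq_mul]

noncomputable instance asModuleSMulCommClass {k G V : Type*} [CommSemiring k] [Monoid G]
    [AddCommMonoid V] [Module k V] (ρ : Representation k G V) :
    SMulCommClass (MonoidAlgebra k G) k ρ.asModule where
  smul_comm r c v := by
    apply ρ.asModuleEquiv.injective
    calc ρ.asModuleEquiv (r • c • v)
        = ρ.asAlgebraHom r (ρ.asModuleEquiv (c • v)) := ρ.asModuleEquiv_map_smul r (c • v)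
      _ = ρ.asAlgebraHom r (c • ρ.asModuleEquiv v) := rfl
      _ = c • ρ.asAlgebraHom r (ρ.asModuleEquiv v) := map_smul _ c _
      _ = c • ρ.asModuleEquiv (r • v) := by rw [ρ.asModuleEquiv_map_smul r v]
      _ = ρ.asModuleEquiv (c • r • v) := rfl

/-- The 'entrywise ρ' operator T_A : (Fin M → V) →ₗ[k] (Fin N → V),
(T_A w) i = ∑ j, ρ̂(A i j)(w j). -/
noncomputable def entrywiseRho {k G V : Type*} [CommSemiring k] [Monoid G]
    [AddCommMonoid V] [Module k V] (ρ : Representation k G V)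
    (N M : ℕ) (A : Fin N → Fin M → MonoidAlgebra k G) :
    (Fin M → V) →ₗ[k] (Fin N → V) where
  toFun w := fun i => ∑ j, ρ.asAlgebraHom (A i j) (w j)
  map_add' w w' := by
    funext i
    simp [Finset.sum_add_distrib]
  map_smul' c w := by
    funext i
    simp [Finset.smul_sum]

section HomFunctor

variable {R S P Q L N : Type*} [Ring R] [AddCommGroup P] [Module R P] [AddCommGroup Q] [Module R Q]
  [AddCommGroup L] [Module R L] [AddCommGroup N] [Module R N]

theorem baer_of_isSemisimpleRing [IsSemisimpleRing R] : Module.Baer R N := fun I g ↦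
  have ⟨h, hg⟩ := IsSemisimpleModule.extension_property I.subtype I.injective_subtype g
  ⟨h, fun x hx ↦ LinearMap.congr_fun hg ⟨x, hx⟩⟩

theorem exists_comp_eq_of_ker_le_ker (hN : Module.Baer R N) (d : P →ₗ[R] Q) (f : P →ₗ[R] N)
    (hf : LinearMap.ker d ≤ LinearMap.ker f) : ∃ g : Q →ₗ[R] N, g ∘ₗ d = f := by
  have hinj : Function.Injective ((LinearMap.ker d).liftQ d le_rfl) :=
    LinearMap.ker_eq_bot.1 (Submodule.ker_liftQ_eq_bot _ _ _ le_rfl)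
  obtain ⟨g, hg⟩ := hN.extension_property _ hinj ((LinearMap.ker d).liftQ f hf)
  exact ⟨g, LinearMap.ext fun x ↦ LinearMap.congr_fun hg (Submodule.Quotient.mk x)⟩

section Semiring

variable [Semiring S] [Module S N] [SMulCommClass R S N]

theorem lcomp_surjective_of_injective (hN : Module.Baer R N) (i : P →ₗ[R] Q)
    (hi : Function.Injective i) : Function.Surjective (LinearMap.lcomp S N i) :=
  hN.extension_property i hi

theorem exact_lcomp_of_exact (hN : Module.Baer R N) {i : L →ₗ[R] P} {d : P →ₗ[R] Q}
    (h : Function.Exact i d) : Function.Exact (LinearMap.lcomp S N d) (LinearMap.lcomp S N i) := by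
  refine fun f ↦ ⟨fun hf ↦ ?_, ?_⟩
  · refine exists_comp_eq_of_ker_le_ker hN d f ?_
    rw [h.linearMap_ker_eq]
    exact LinearMap.range_le_ker_iff.2 hf
  · rintro ⟨g, rfl⟩
    rw [LinearMap.lcomp_apply', LinearMap.lcomp_apply', LinearMap.comp_assoc,
      h.linearMap_comp_eq_zero, LinearMap.comp_zero]

variable (S N)

/-- The universal property of the cokernel of `d` as a linear equivalence: maps out of `coker d` are
the maps `f` out of the codomain with `f ∘ d = 0`. -/
def homCokerEquiv (d : P →ₗ[R] Q) :
    ((Q ⧸ LinearMap.range d) →ₗ[R] N) ≃ₗ[S] LinearMap.ker (LinearMap.lcomp S N d) where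
  toFun f := ⟨f ∘ₗ (LinearMap.range d).mkQ, by
    rw [LinearMap.mem_ker, LinearMap.lcomp_apply', LinearMap.comp_assoc, LinearMap.range_mkQ_comp,
      LinearMap.comp_zero]⟩
  map_add' _ _ := rfl
  map_smul' _ _ := rfl
  invFun f := (LinearMap.range d).liftQ f (LinearMap.range_le_ker_iff.2 f.2)
  left_inv _ := Submodule.linearMap_qext _ (Submodule.liftQ_mkQ _ _ _)
  right_inv _ := Subtype.ext (Submodule.liftQ_mkQ _ _ _)

end Semiring

variable (S) in
/-- For injective `N`, maps out of `ker d` are the restrictions of maps out of the domain, and two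
of these agree on `ker d` exactly when they differ by a map factoring through `d`. Injectivity is
expressed by Baer's criterion, which is free of universe constraints. -/
noncomputable def homKerEquiv [Ring S] [Module S N] [SMulCommClass R S N] (hN : Module.Baer R N)
    (d : P →ₗ[R] Q) :
    (LinearMap.ker d →ₗ[R] N) ≃ₗ[S] (P →ₗ[R] N) ⧸ LinearMap.range (LinearMap.lcomp S N d) :=
  (Submodule.quotEquivOfEq _ _
      (exact_lcomp_of_exact hN d.exact_subtype_ker_map).linearMap_ker_eq.symm ≪≫ₗ
    (LinearMap.lcomp S N (LinearMap.ker d).subtype).quotKerEquivOfSurjective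
      (lcomp_surjective_of_injective hN _ (LinearMap.ker d).injective_subtype)).symm

end HomFunctor

section CommutativeSquare

variable {S X X' Y Y' : Type*} [Semiring S] [AddCommMonoid X] [Module S X] [AddCommMonoid X']
  [Module S X'] [AddCommMonoid Y] [Module S Y] [AddCommMonoid Y'] [Module S Y']
  {f : X →ₗ[S] Y} {g : X' →ₗ[S] Y'} {e : X →ₗ[S] X'} {e' : Y →ₗ[S] Y'}

theorem map_ker_of_comm (h : e' ∘ₗ f = g ∘ₗ e) (he : Function.Surjective e)
    (he' : LinearMap.ker e' = ⊥) : (LinearMap.ker f).map e = LinearMap.ker g := by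
  rw [← LinearMap.ker_comp_of_ker_eq_bot f he', h, LinearMap.ker_comp,
    Submodule.map_comap_eq_of_surjective he]

theorem map_range_of_comm (h : e' ∘ₗ f = g ∘ₗ e) (he : Function.Surjective e) :
    (LinearMap.range f).map e' = LinearMap.range g := by
  rw [← LinearMap.range_comp, h,
    LinearMap.range_comp_of_range_eq_top g (LinearMap.range_eq_top.2 he)]

end CommutativeSquare

theorem matrixBoundary_single {R : Type*} [Ring R] {N M : ℕ} (A : Fin N → Fin M → R) (i : Fin N) :
    matrixBoundary R N M A (Pi.single i 1) = A i := by
  funext j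
  simp [matrixBoundary, Pi.single_apply]

section Representation

/-- Evaluation at the standard basis, `Hom_R(R^ι, V) ≃ V^ι` for `R = k[G]`. -/
noncomputable def homFreeEquiv {k G V : Type*} [CommSemiring k] [Monoid G] [AddCommMonoid V]
    [Module k V] (ρ : Representation k G V) (ι : Type*) [Fintype ι] [DecidableEq ι] :
    ((ι → MonoidAlgebra k G) →ₗ[MonoidAlgebra k G] ρ.asModule) ≃ₗ[k] (ι → V) :=
  LinearEquiv.piRing (MonoidAlgebra k G) ρ.asModule ι k ≪≫ₗ
    LinearEquiv.piCongrRight fun _ ↦ ρ.asModuleEquiv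

variable {k G V : Type*} [CommRing k] [Monoid G] [AddCommGroup V] [Module k V]
  (ρ : Representation k G V) (N M : ℕ) (A : Fin N → Fin M → MonoidAlgebra k G)

theorem homFreeEquiv_comp_lcomp_matrixBoundary :
    (homFreeEquiv ρ (Fin N)).toLinearMap ∘ₗ
        LinearMap.lcomp k ρ.asModule (matrixBoundary (MonoidAlgebra k G) N M A) =
      entrywiseRho ρ N M A ∘ₗ (homFreeEquiv ρ (Fin M)).toLinearMap := by
  refine LinearMap.ext fun f ↦ funext fun i ↦ ?_
  calc ρ.asModuleEquiv (f (matrixBoundary (MonoidAlgebra k G) N M A (Pi.single i 1)))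
      = ρ.asModuleEquiv (f (∑ j, A i j • Pi.single j 1)) := by
        rw [matrixBoundary_single, ← pi_eq_sum_univ' (A i)]
    _ = ∑ j, ρ.asAlgebraHom (A i j) (ρ.asModuleEquiv (f (Pi.single j 1))) := by
        simp only [map_sum, map_smul, Representation.asModuleEquiv_map_smul]

theorem hom_dimensions_equal_multiplicity_space_dimensions_general :
    Nonempty ((((Fin M → MonoidAlgebra k G) ⧸
            LinearMap.range (matrixBoundary (MonoidAlgebra k G) N M A))
          →ₗ[MonoidAlgebra k G] ρ.asModule)
        ≃ₗ[k] LinearMap.ker (entrywiseRho ρ N M A)) ∧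
    (Module.Baer (MonoidAlgebra k G) ρ.asModule →
      Nonempty ((LinearMap.ker (matrixBoundary (MonoidAlgebra k G) N M A)
          →ₗ[MonoidAlgebra k G] ρ.asModule)
        ≃ₗ[k] (Fin N → V) ⧸ LinearMap.range (entrywiseRho ρ N M A))) := by
  have hcomm := homFreeEquiv_comp_lcomp_matrixBoundary ρ N M A
  have hsurj := (homFreeEquiv ρ (Fin M)).surjective
  have hker := map_ker_of_comm hcomm hsurj (homFreeEquiv ρ (Fin N)).ker
  have hrange := map_range_of_comm hcomm hsurj
  exact ⟨⟨homCokerEquiv k ρ.asModule _ ≪≫ₗ (homFreeEquiv ρ (Fin M)).ofSubmodules _ _ hker⟩,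
    fun hV ↦ ⟨homKerEquiv k hV _ ≪≫ₗ
      Submodule.Quotient.equiv _ _ (homFreeEquiv ρ (Fin N)) hrange⟩⟩

end Representation

/-- for a finite group G with order invertible in the field k, a
finite-dimensional representation (V, ρ), and the 2-step complex of free modules over
R = MonoidAlgebra k G given by the matrix A, the k-dimensions of the R-Hom spaces out of
the cokernel and the kernel of ∂ equal the k-dimensions of the kernel and the cokernel of
the 'entrywise ρ' operator T_A, respectively. -/
theorem hom_dimensions_equal_multiplicity_space_dimensions
    (G : Type*) [Group G] [Fintype G] (k : Type*) [Field k]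
    (hcard : (Fintype.card G : k) ≠ 0)
    (V : Type*) [AddCommGroup V] [Module k V] [FiniteDimensional k V]
    (ρ : Representation k G V)
    (N M : ℕ) (A : Fin N → Fin M → MonoidAlgebra k G) :
    (Module.finrank k
        (((Fin M → MonoidAlgebra k G) ⧸
            LinearMap.range (matrixBoundary (MonoidAlgebra k G) N M A))
          →ₗ[MonoidAlgebra k G] ρ.asModule)
      = Module.finrank k (LinearMap.ker (entrywiseRho ρ N M A))) ∧
    (Module.finrank k
        ((LinearMap.ker (matrixBoundary (MonoidAlgebra k G) N M A))
          →ₗ[MonoidAlgebra k G] ρ.asModule)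
      = Module.finrank k ((Fin N → V) ⧸ LinearMap.range (entrywiseRho ρ N M A))) := by
  have : NeZero (Nat.card G : k) := ⟨by rwa [Nat.card_eq_fintype_card]⟩
  obtain ⟨⟨e⟩, h⟩ := hom_dimensions_equal_multiplicity_space_dimensions_general ρ N M A
  exact ⟨e.finrank_eq, (h baer_of_isSemisimpleRing).some.finrank_eq⟩
end
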